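/- arXiv:2402.02573 — 2 statements merged into one kernel-verified Lean document; each statement's English description precedes it below -/
import Mathlib

section
/- For all natural numbers k ≥ 1 and all i with 1 ≤ i ≤ k+1, one has (2k+3)·C(k+1,i) ≤ C(2k+3,i+1). -/
/-!
An `(a + b)`-subset of an `m`-set splits in at least one way into an `a`-subset and a `b`-subset,
so `C(m,a+b) ≤ C(m,a)·C(m,b)`. Hence each of the `i + 1` terms of Vandermonde's sum for `C(2m,i)`
is at least `C(m,i)`. For `2m ≤ n` the absorption identity `(n+1)·C(n,i) = (i+1)·C(n+1,i+1)` then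
trades the factor `i + 1` for `n + 1`.
-/

open Finset MeasureTheory
open scoped ENNReal

/-- A finite abstract simplicial complex on vertex type `V`. -/
structure SComplex (V : Type) where
  faces : Finset (Finset V)
  down_closed : ∀ ⦃s⦄, s ∈ faces → ∀ ⦃t : Finset V⦄, t ⊆ s → t ∈ faces

/-- Simplicial coboundary of a cochain. -/
def delta {V : Type} [LinearOrder V] {R : Type} [CommRing R]
    (a : Finset V → R) : Finset V → R :=
  fun s => ∑ v ∈ s, (-1 : R) ^ (s.filter (fun w => w < v)).card * a (s.erase v)

def IsCocycle {V : Type} [LinearOrder V] (X : SComplex V) (R : Type) [CommRing R]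
    (k : ℕ) (a : Finset V → R) : Prop :=
  ∀ s ∈ X.faces, s.card = k + 2 → delta a s = 0

def IsCoboundary {V : Type} [LinearOrder V] (X : SComplex V) (R : Type) [CommRing R]
    (k : ℕ) (a : Finset V → R) : Prop :=
  ∃ f : Finset V → R, ∀ s ∈ X.faces, s.card = k + 1 → a s = delta f s

/-- The simplicial cup product of a `k`-cochain and an `l`-cochain. -/
def cup {V : Type} [LinearOrder V] {R : Type} [CommRing R] (k l : ℕ)
    (a b : Finset V → R) : Finset V → R :=
  fun s => a ((s.sort (· ≤ ·)).take (k + 1)).toFinset *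
    b ((s.sort (· ≤ ·)).drop k).toFinset

/-- Bernoulli measure on `Bool` with success probability `p`. -/
noncomputable def bernoulliMeasure (p : ℝ≥0∞) : Measure Bool :=
  p • Measure.dirac true + (1 - p) • Measure.dirac false

/-- Each subset `s` with `|s| = i+1` is selected independently with probability `p i`. -/
noncomputable def selectionMeasure (n : ℕ) (p : ℕ → ℝ≥0∞) :
    Measure (Finset (Fin n) → Bool) :=
  Measure.pi fun s => bernoulliMeasure (p (s.card - 1))

/-- The lower multiparametric model: maximal complex contained in the selected hypergraph. -/
def lowerComplex (n : ℕ) (ω : Finset (Fin n) → Bool) : SComplex (Fin n) where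
  faces := Finset.univ.filter fun s => ∀ t ⊆ s, 2 ≤ t.card → ω t = true
  down_closed := by
    intro s hs t hts
    simp only [Finset.mem_filter, Finset.mem_univ, true_and] at hs ⊢
    exact fun u hu hc => hs u (hu.trans hts) hc

/-- The upper multiparametric model: minimal complex containing the selected hypergraph. -/
def upperComplex (n : ℕ) (ω : Finset (Fin n) → Bool) : SComplex (Fin n) where
  faces := Finset.univ.filter fun s =>
    s.card ≤ 1 ∨ ∃ t, s ⊆ t ∧ 2 ≤ t.card ∧ ω t = true
  down_closed := by
    intro s hs t hts
    simp only [Finset.mem_filter, Finset.mem_univ, true_and] at hs ⊢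
    rcases hs with h | ⟨u, hsu, hc, hω⟩
    · exact Or.inl (le_trans (Finset.card_le_card hts) h)
    · exact Or.inr ⟨u, hts.trans hsu, hc, hω⟩

/-- Selection probabilities of the lower model: `p i = n ^ (-α i)`. -/
noncomputable def lowerP (α : ℕ → ℝ) (n : ℕ) : ℕ → ℝ≥0∞ :=
  fun i => ENNReal.ofReal ((n : ℝ) ^ (-(α i)))

/-- Selection probabilities of the upper model with `D` parameters. -/
noncomputable def upperP (D : ℕ) (α : ℕ → ℝ) (n : ℕ) : ℕ → ℝ≥0∞ :=
  fun i => if i ≤ D then ENNReal.ofReal ((n : ℝ) ^ (-(α i))) else 0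

def S1 (α : ℕ → ℝ) (k : ℕ) : ℝ :=
  ∑ i ∈ Finset.Icc 1 (k + 1), ((k + 1).choose i : ℝ) * α i

def S2 (α : ℕ → ℝ) (k : ℕ) : ℝ :=
  ∑ i ∈ Finset.Icc 1 k, ((k + 2).choose (i + 1) : ℝ) * α i

/-- The `d`-dimensional faces of a complex. -/
def dimFaces {V : Type} [DecidableEq V] (X : SComplex V) (d : ℕ) : Finset (Finset V) :=
  X.faces.filter fun s => s.card = d + 1

/-- Adjacency of `d`-faces: sharing a `(d-1)`-dimensional face. -/
def AdjRel {V : Type} [DecidableEq V] (X : SComplex V) (d : ℕ) (σ τ : Finset V) : Prop :=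
  σ ∈ dimFaces X d ∧ τ ∈ dimFaces X d ∧ d ≤ (σ ∩ τ).card

def IsPure {V : Type} [DecidableEq V] (X : SComplex V) (d : ℕ) : Prop :=
  ∀ s ∈ X.faces, ∃ t ∈ X.faces, s ⊆ t ∧ t.card = d + 1

def StronglyConnected {V : Type} [DecidableEq V] (X : SComplex V) (d : ℕ) : Prop :=
  (dimFaces X d).Nonempty ∧
    ∀ σ ∈ dimFaces X d, ∀ τ ∈ dimFaces X d, Relation.ReflTransGen (AdjRel X d) σ τ

open scoped Classical in
/-- The strong connectivity component of the `d`-face `σ0`. -/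
noncomputable def component {V : Type} [DecidableEq V] (X : SComplex V) (d : ℕ)
    (σ0 : Finset V) : SComplex V where
  faces := (X.faces.filter fun τ =>
      τ.card = d + 1 ∧ Relation.ReflTransGen (AdjRel X d) σ0 τ).biUnion Finset.powerset
  down_closed := by
    intro s hs t hts
    simp only [Finset.mem_biUnion, Finset.mem_powerset] at hs ⊢
    obtain ⟨u, hu, hsu⟩ := hs
    exact ⟨u, hu, hts.trans hsu⟩

/-- The `d`-skeleton of a complex. -/
def skeleton {V : Type} [DecidableEq V] (X : SComplex V) (d : ℕ) : SComplex V where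
  faces := X.faces.filter fun s => s.card ≤ d + 1
  down_closed := by
    intro s hs t hts
    simp only [Finset.mem_filter] at hs ⊢
    exact ⟨X.down_closed hs.1 hts, le_trans (Finset.card_le_card hts) hs.2⟩

/-- The subcomplex generated by a family of faces. -/
def generated {V : Type} [DecidableEq V] (F : Finset (Finset V)) : SComplex V where
  faces := F.biUnion Finset.powerset
  down_closed := by
    intro s hs t hts
    simp only [Finset.mem_biUnion, Finset.mem_powerset] at hs ⊢
    obtain ⟨u, hu, hsu⟩ := hs
    exact ⟨u, hu, hts.trans hsu⟩

/-- There is an elementary collapse from `X` to `Y`. -/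
def ElemCollapse {V : Type} [DecidableEq V] (X Y : SComplex V) : Prop :=
  ∃ σ τ : Finset V, σ ∈ X.faces ∧ τ ∈ X.faces ∧ σ ⊂ τ ∧ τ.card = σ.card + 1 ∧
    (∀ ρ ∈ X.faces, σ ⊆ ρ → ρ = σ ∨ ρ = τ) ∧ Y.faces = X.faces \ {σ, τ}

/-- `X` collapses onto dimension `l`. -/
def CollapsesOntoDim {V : Type} [DecidableEq V] (X : SComplex V) (l : ℤ) : Prop :=
  ∃ Y : SComplex V, Relation.ReflTransGen ElemCollapse X Y ∧
    ∀ s ∈ Y.faces, (s.card : ℤ) ≤ l + 1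

/-- Expected number of embeddings of `C` into the lower multiparametric complex. -/
noncomputable def expEmb {W : Type} [Fintype W] [DecidableEq W] (C : SComplex W)
    (α : ℕ → ℝ) (n : ℕ) : ℝ≥0∞ :=
  ∫⁻ ω, (Nat.card {φ : W ↪ Fin n //
      ∀ σ ∈ C.faces, σ.map φ ∈ (lowerComplex n ω).faces} : ℝ≥0∞)
    ∂ selectionMeasure n (lowerP α n)

lemma choose_add_le_choose_mul_choose (m i j : ℕ) :
    m.choose (i + j) ≤ m.choose i * m.choose j :=
  calc m.choose (i + j)
      ≤ m.choose (i + j) * (i + j).choose i :=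
        Nat.le_mul_of_pos_right _ (Nat.choose_pos (Nat.le_add_right i j))
    _ = m.choose i * (m - i).choose j := by
        rw [Nat.choose_mul (Nat.le_add_right i j), Nat.add_sub_cancel_left]
    _ ≤ m.choose i * m.choose j :=
        Nat.mul_le_mul_left _ (Nat.choose_le_choose j (Nat.sub_le m i))

lemma add_one_mul_choose_le_choose_of_two_mul_le {m n : ℕ} (hmn : 2 * m ≤ n) (i : ℕ) :
    (i + 1) * m.choose i ≤ n.choose i :=
  calc (i + 1) * m.choose i
      = ∑ _p ∈ antidiagonal i, m.choose i := by
        rw [sum_const, Nat.card_antidiagonal, smul_eq_mul]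
    _ ≤ ∑ p ∈ antidiagonal i, m.choose p.1 * m.choose p.2 := by
        refine sum_le_sum fun p hp ↦ ?_
        rw [← mem_antidiagonal.mp hp]
        exact choose_add_le_choose_mul_choose m p.1 p.2
    _ = (2 * m).choose i := by rw [two_mul, Nat.add_choose_eq]
    _ ≤ n.choose i := Nat.choose_le_choose i hmn

theorem coefficientwise_binomial_ineq_general {m n : ℕ} (hmn : 2 * m ≤ n) (i : ℕ) :
    (n + 1) * m.choose i ≤ (n + 1).choose (i + 1) := by
  refine Nat.le_of_mul_le_mul_right ?_ i.succ_pos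
  calc (n + 1) * m.choose i * (i + 1)
      = (n + 1) * ((i + 1) * m.choose i) := by ring
    _ ≤ (n + 1) * n.choose i := by
        gcongr
        exact add_one_mul_choose_le_choose_of_two_mul_le hmn i
    _ = (n + 1).choose (i + 1) * (i + 1) := Nat.add_one_mul_choose_eq n i

/-- the coefficient-wise inequality `(2k+3)·C(k+1,i) ≤ C(2k+3,i+1)`. -/
theorem coefficientwise_binomial_ineq (k i : ℕ) (hk : 1 ≤ k) (hi1 : 1 ≤ i)
    (hi2 : i ≤ k + 1) :
    (2 * k + 3) * (k + 1).choose i ≤ (2 * k + 3).choose (i + 1) :=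
  coefficientwise_binomial_ineq_general (m := k + 1) (n := 2 * k + 2) (mul_add_one 2 k).le i
end

section
/- Let α_1, α_2 > 0 satisfy ε := 2α_1 + α_2 − 1 > 0, and let K be a natural number with K ≥ 2/ε + 4. Then in the lower multiparametric model X ~ X_(n; α_1, α_2, …) (with arbitrary α_i ≥ 0 for i ≥ 3), asymptotically almost surely X contains no strongly connected pure 2-dimensional subcomplex with K or more vertices. Consequently, a.a.s. only the finitely many isomorphism types of strongly connected pure 2-dimensional complexes on fewer than K vertices can appear as subcomplexes of X. -/
/-!
A strongly connected pure `d`-dimensional complex with at least `d + m` vertices contains a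
subcomplex grown from `d` vertices by `m` moves, each of which joins a new vertex to `d` vertices
already present: as long as some vertex is missing, an adjacency path of `d`-faces towards it leaves
the current vertex set, and the first `d`-face that does so has exactly one vertex outside. A move
creates `d.choose i` new `i`-faces for each `1 ≤ i ≤ d`, so the faces recorded during `m` moves are
all selected with probability `(∏ p_i ^ d.choose i) ^ m = n ^ (-m S)`, where
`S = ∑ d.choose i * α_i`, that is, `S1 α (d - 1)`.

There are only `O(n ^ (d + m))` sequences of moves, so by the union bound one of them is realized
with probability `O(n ^ (d - m (S - 1)))`, which tends to zero once `m > d / (S - 1)`.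
-/

open Finset MeasureTheory
open scoped ENNReal

section ConeFaces

variable {V : Type*} [DecidableEq V] {x : V} {σ s : Finset V}

/-- The faces of positive dimension that the cone with apex `x` adds to the simplex `σ`. -/
def coneFaces (x : V) (σ : Finset V) : Finset (Finset V) :=
  (σ.powerset.erase ∅).image (insert x)

lemma mem_coneFaces : s ∈ coneFaces x σ ↔ ∃ t ⊆ σ, t.Nonempty ∧ insert x t = s := by
  simp only [coneFaces, mem_image, mem_erase, mem_powerset, nonempty_iff_ne_empty]
  grind

lemma apex_mem_of_mem_coneFaces (hs : s ∈ coneFaces x σ) : x ∈ s := by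
  obtain ⟨t, -, -, rfl⟩ := mem_coneFaces.1 hs
  exact mem_insert_self x t

lemma subset_insert_of_mem_coneFaces (hs : s ∈ coneFaces x σ) : s ⊆ insert x σ := by
  obtain ⟨t, htσ, -, rfl⟩ := mem_coneFaces.1 hs
  exact insert_subset_insert x htσ

lemma two_le_card_of_mem_coneFaces (hx : x ∉ σ) (hs : s ∈ coneFaces x σ) : 2 ≤ #s := by
  obtain ⟨t, htσ, ht, rfl⟩ := mem_coneFaces.1 hs
  rw [card_insert_of_notMem fun hxt => hx (htσ hxt)]
  exact Nat.succ_le_succ ht.card_pos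

lemma prod_coneFaces {M : Type*} [CommMonoid M] (f : ℕ → M) (hx : x ∉ σ) :
    ∏ s ∈ coneFaces x σ, f (#s - 1) = ∏ i ∈ Icc 1 #σ, f i ^ (#σ).choose i := by
  have hx' {t : Finset V} (ht : t ∈ σ.powerset.erase ∅) : x ∉ t :=
    fun hxt => hx (mem_powerset.1 (mem_of_mem_erase ht) hxt)
  have hcard : ∀ t ∈ σ.powerset.erase ∅, #t ∈ Icc 1 #σ := fun t ht => by
    simp only [mem_erase, mem_powerset] at ht
    exact mem_Icc.2 ⟨(nonempty_iff_ne_empty.2 ht.1).card_pos, card_le_card ht.2⟩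
  calc ∏ s ∈ coneFaces x σ, f (#s - 1)
    _ = ∏ t ∈ σ.powerset.erase ∅, f (#(insert x t) - 1) :=
        prod_image (insert_erase_invOn.2.injOn.mono fun _ => hx')
    _ = ∏ t ∈ σ.powerset.erase ∅, f #t :=
        prod_congr rfl fun t ht => by rw [card_insert_of_notMem (hx' ht), Nat.add_sub_cancel]
    _ = ∏ i ∈ Icc 1 #σ, ∏ t ∈ σ.powerset.erase ∅ with #t = i, f i :=
        (prod_fiberwise_of_maps_to' hcard f).symm
    _ = ∏ i ∈ Icc 1 #σ, f i ^ (#σ).choose i := prod_congr rfl fun i hi => by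
        have hfiber : {t ∈ σ.powerset.erase ∅ | #t = i} = σ.powersetCard i := by
          ext t
          simp only [mem_filter, mem_erase, mem_powerset, mem_powersetCard, mem_Icc,
            ne_eq, ← card_eq_zero] at hi ⊢
          lia
        rw [prod_const, hfiber, card_powersetCard]

end ConeFaces

section Gluing

variable {V : Type*} [DecidableEq V]

/-- `IsGluing d m W A` says that, starting from `d` vertices, `m` successive moves, each joining a
new vertex to `d` vertices already present, produce the vertex set `W` and create the faces `A`.
The faces spanned by the `d` initial vertices are not recorded in `A`, nor are the vertices. -/
inductive IsGluing (d : ℕ) : ℕ → Finset V → Finset (Finset V) → Prop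
  | start {W : Finset V} (hW : #W = d) : IsGluing d 0 W ∅
  | glue {m : ℕ} {W : Finset V} {A : Finset (Finset V)} {x : V} {σ : Finset V}
      (h : IsGluing d m W A) (hx : x ∉ W) (hσ : σ ⊆ W) (hd : #σ = d) :
      IsGluing d (m + 1) (insert x W) (A ∪ coneFaces x σ)

namespace IsGluing

variable {d m : ℕ} {W : Finset V} {A : Finset (Finset V)}

lemma card_vertices (h : IsGluing d m W A) : #W = d + m := by
  induction h with
  | start hW => exact hW
  | glue _ hx _ _ ih => rw [card_insert_of_notMem hx, ih, add_assoc]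

lemma subset_vertices (h : IsGluing d m W A) {s : Finset V} (hs : s ∈ A) : s ⊆ W := by
  induction h with
  | start => simp at hs
  | @glue _ W _ x _ _ _ hσ _ ih =>
    rcases mem_union.1 hs with hs | hs
    · exact (ih hs).trans (subset_insert x W)
    · exact (subset_insert_of_mem_coneFaces hs).trans (insert_subset_insert x hσ)

lemma two_le_card (h : IsGluing d m W A) {s : Finset V} (hs : s ∈ A) : 2 ≤ #s := by
  induction h with
  | start => simp at hs
  | glue _ hx hσ _ ih =>
    rcases mem_union.1 hs with hs | hs
    · exact ih hs
    · exact two_le_card_of_mem_coneFaces (fun hxσ => hx (hσ hxσ)) hs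

lemma prod_card_sub_one {M : Type*} [CommMonoid M] (f : ℕ → M) (h : IsGluing d m W A) :
    ∏ s ∈ A, f (#s - 1) = (∏ i ∈ Icc 1 d, f i ^ d.choose i) ^ m := by
  induction h with
  | start => simp
  | @glue m W A x σ h hx hσ hd ih =>
    have hdisj : Disjoint A (coneFaces x σ) := disjoint_left.2 fun s hsA hs =>
      hx (h.subset_vertices hsA (apex_mem_of_mem_coneFaces hs))
    rw [prod_union hdisj, ih, prod_coneFaces f fun hxσ => hx (hσ hxσ), hd, pow_succ]

end IsGluing

variable (V) [Fintype V] (d m : ℕ)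

open scoped Classical in
/-- All pairs `(W, A)` with `IsGluing d m W A`, collected in a `Finset` in order to count them. -/
noncomputable def gluings : Finset (Finset V × Finset (Finset V)) :=
  {c | IsGluing d m c.1 c.2}

variable {V d m} in
lemma mem_gluings {c : Finset V × Finset (Finset V)} :
    c ∈ gluings V d m ↔ IsGluing d m c.1 c.2 := by
  simp [gluings]

lemma card_gluings_zero_le : #(gluings V d 0) ≤ Fintype.card V ^ d := by
  have hsub : gluings V d 0 ⊆ (univ.powersetCard d).image fun W => (W, ∅) := by
    rintro ⟨W, A⟩ hc
    cases mem_gluings.1 hc with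
    | start hW => exact mem_image_of_mem _ (mem_powersetCard.2 ⟨subset_univ W, hW⟩)
  calc #(gluings V d 0)
    _ ≤ #(univ.powersetCard d : Finset (Finset V)) := (card_le_card hsub).trans card_image_le
    _ ≤ Fintype.card V ^ d := by
        rw [card_powersetCard, card_univ]
        exact Nat.choose_le_pow _ _

lemma card_gluings_succ_le :
    #(gluings V d (m + 1)) ≤ #(gluings V d m) * (Fintype.card V * (d + m).choose d) := by
  have hsub : gluings V d (m + 1) ⊆ (gluings V d m).biUnion fun c =>
      (univ ×ˢ c.1.powersetCard d).image fun q => (insert q.1 c.1, c.2 ∪ coneFaces q.1 q.2) := by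
    rintro ⟨_, _⟩ hc
    cases mem_gluings.1 hc with
    | @glue _ W A x σ h _ hσ hd =>
      exact mem_biUnion.2 ⟨(W, A), mem_gluings.2 h, mem_image.2 ⟨(x, σ),
        mem_product.2 ⟨mem_univ x, mem_powersetCard.2 ⟨hσ, hd⟩⟩, rfl⟩⟩
  refine (card_le_card hsub).trans (card_biUnion_le_card_mul _ _ _ fun c hc => ?_)
  refine card_image_le.trans_eq ?_
  rw [card_product, card_univ, card_powersetCard, (mem_gluings.1 hc).card_vertices]

lemma card_gluings_le :
    #(gluings V d m) ≤ (∏ j ∈ range m, (d + j).choose d) * Fintype.card V ^ (d + m) := by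
  induction m with
  | zero => simpa using card_gluings_zero_le V d
  | succ m ih =>
    calc #(gluings V d (m + 1))
      _ ≤ #(gluings V d m) * (Fintype.card V * (d + m).choose d) := card_gluings_succ_le V d m
      _ ≤ (∏ j ∈ range m, (d + j).choose d) * Fintype.card V ^ (d + m) *
            (Fintype.card V * (d + m).choose d) := by gcongr
      _ = (∏ j ∈ range (m + 1), (d + j).choose d) * Fintype.card V ^ (d + (m + 1)) := by
          rw [prod_range_succ]
          ring

end Gluing

lemma exists_eq_insert_of_card_inter {V : Type*} [DecidableEq V] {d : ℕ} {W τ : Finset V}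
    (hτ : #τ = d + 1) (hτW : d ≤ #(τ ∩ W)) (hnot : ¬ τ ⊆ W) :
    ∃ x ∉ W, ∃ σ ⊆ W, #σ = d ∧ τ = insert x σ := by
  obtain ⟨x, hxτ, hxW⟩ := not_subset.1 hnot
  have hcard : #(τ.erase x) = d := by rw [card_erase_of_mem hxτ, hτ, Nat.add_sub_cancel]
  have hinter : τ ∩ W = τ.erase x := by
    refine eq_of_subset_of_card_le (fun y hy => ?_) (hcard.trans_le hτW)
    obtain ⟨hyτ, hyW⟩ := mem_inter.1 hy
    exact mem_erase.2 ⟨ne_of_mem_of_not_mem hyW hxW, hyτ⟩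
  exact ⟨x, hxW, τ.erase x, hinter ▸ inter_subset_right, hcard, (insert_erase hxτ).symm⟩

section StronglyConnected

variable {V : Type} [DecidableEq V] {Y : SComplex V} {d : ℕ} {W σ τ : Finset V}

lemma mem_dimFaces : σ ∈ dimFaces Y d ↔ σ ∈ Y.faces ∧ #σ = d + 1 :=
  mem_filter

lemma exists_mem_dimFaces_not_subset (hσ : σ ∈ dimFaces Y d) (hσW : d ≤ #(σ ∩ W))
    (hστ : Relation.ReflTransGen (AdjRel Y d) σ τ) (hτ : ¬ τ ⊆ W) :
    ∃ ρ ∈ dimFaces Y d, d ≤ #(ρ ∩ W) ∧ ¬ ρ ⊆ W := by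
  induction hστ with
  | refl => exact ⟨σ, hσ, hσW, hτ⟩
  | @tail ρ τ _ hρτ ih =>
    by_cases hρ : ρ ⊆ W
    · obtain ⟨-, hτY, hcard⟩ := hρτ
      refine ⟨τ, hτY, hcard.trans (card_le_card ?_), hτ⟩
      rw [inter_comm ρ]
      exact inter_subset_inter_left hρ
    · exact ih hρ

lemma exists_insert_mem_dimFaces (hp : IsPure Y d) (hs : StronglyConnected Y d)
    (hσ : σ ∈ dimFaces Y d) (hσW : d ≤ #(σ ∩ W)) (hW : #W < #(Y.faces.sup id)) :
    ∃ x ∉ W, ∃ τ ⊆ W, #τ = d ∧ insert x τ ∈ dimFaces Y d := by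
  obtain ⟨v, hv, hvW⟩ := exists_mem_notMem_of_card_lt_card hW
  obtain ⟨s, hsY, hvs⟩ := mem_sup.1 hv
  obtain ⟨τ, hτY, hsτ, hτ⟩ := hp s hsY
  have hpath := hs.2 σ hσ τ (mem_dimFaces.2 ⟨hτY, hτ⟩)
  obtain ⟨ρ, hρ, hρW, hnot⟩ :=
    exists_mem_dimFaces_not_subset hσ hσW hpath fun hτW => hvW (hτW (hsτ hvs))
  obtain ⟨x, hx, τ', hτ', hcard, rfl⟩ :=
    exists_eq_insert_of_card_inter (mem_dimFaces.1 hρ).2 hρW hnot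
  exact ⟨x, hx, τ', hτ', hcard, hρ⟩

/-- The last conjunct provides the start of the adjacency path followed in the next move. -/
lemma exists_isGluing_subset_faces (hp : IsPure Y d) (hs : StronglyConnected Y d) {m : ℕ}
    (hm : d + m ≤ #(Y.faces.sup id)) :
    ∃ W A, IsGluing d m W A ∧ A ⊆ Y.faces ∧ ∃ σ ∈ dimFaces Y d, d ≤ #(σ ∩ W) := by
  induction m with
  | zero =>
    obtain ⟨σ, hσ⟩ := hs.1
    obtain ⟨W, hWσ, hW⟩ := exists_subset_card_eq (s := σ) (n := d) (by
      have := (mem_dimFaces.1 hσ).2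
      lia)
    exact ⟨W, ∅, .start hW, empty_subset _, σ, hσ, by rw [inter_eq_right.2 hWσ, hW]⟩
  | succ m ih =>
    obtain ⟨W, A, hWA, hAY, σ, hσ, hσW⟩ := ih (by lia)
    obtain ⟨x, hx, τ, hτW, hτ, hxτ⟩ :=
      exists_insert_mem_dimFaces hp hs hσ hσW (by rw [hWA.card_vertices]; lia)
    have hcone : coneFaces x τ ⊆ Y.faces := fun s hsx =>
      Y.down_closed (mem_dimFaces.1 hxτ).1 (subset_insert_of_mem_coneFaces hsx)
    refine ⟨insert x W, A ∪ coneFaces x τ, hWA.glue hx hτW hτ, union_subset hAY hcone,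
      insert x τ, hxτ, ?_⟩
    rw [inter_eq_left.2 (insert_subset_insert x hτW), (mem_dimFaces.1 hxτ).2]
    exact Nat.le_succ d

end StronglyConnected

section UnionBound

variable {n : ℕ} {p : ℕ → ℝ≥0∞}

lemma isProbabilityMeasure_bernoulliMeasure {q : ℝ≥0∞} (hq : q ≤ 1) :
    IsProbabilityMeasure (bernoulliMeasure q) :=
  ⟨by simp [bernoulliMeasure, hq]⟩

lemma isProbabilityMeasure_selectionMeasure (hp : ∀ i, p i ≤ 1) :
    IsProbabilityMeasure (selectionMeasure n p) := by
  have (s : Finset (Fin n)) := isProbabilityMeasure_bernoulliMeasure (hp (#s - 1))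
  unfold selectionMeasure
  infer_instance

lemma selectionMeasure_forall_mem (hp : ∀ i, p i ≤ 1) (A : Finset (Finset (Fin n))) :
    selectionMeasure n p {ω | ∀ s ∈ A, ω s = true} = ∏ s ∈ A, p (#s - 1) := by
  have (s : Finset (Fin n)) := isProbabilityMeasure_bernoulliMeasure (hp (#s - 1))
  calc selectionMeasure n p {ω | ∀ s ∈ A, ω s = true}
    _ = Measure.infinitePi (fun s : Finset (Fin n) => bernoulliMeasure (p (#s - 1)))
          (Set.pi A fun _ => {true}) := by
        rw [Measure.infinitePi_eq_pi]
        rfl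
    _ = ∏ s ∈ A, bernoulliMeasure (p (#s - 1)) {true} :=
        Measure.infinitePi_pi _ fun _ _ => measurableSet_singleton true
    _ = ∏ s ∈ A, p (#s - 1) := by simp [bernoulliMeasure]

/-- The event that all faces created by some sequence of `m` gluing moves are selected. -/
def gluingEvent (n d m : ℕ) : Set (Finset (Fin n) → Bool) :=
  {ω | ∃ W A, IsGluing d m W A ∧ ∀ s ∈ A, ω s = true}

lemma selectionMeasure_gluingEvent_le (hp : ∀ i, p i ≤ 1) (d m : ℕ) :
    selectionMeasure n p (gluingEvent n d m) ≤
      #(gluings (Fin n) d m) * (∏ i ∈ Icc 1 d, p i ^ d.choose i) ^ m := by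
  have hunion : gluingEvent n d m = ⋃ c ∈ gluings (Fin n) d m, {ω | ∀ s ∈ c.2, ω s = true} := by
    ext ω
    simp [gluingEvent, mem_gluings]
  calc selectionMeasure n p (gluingEvent n d m)
    _ ≤ ∑ c ∈ gluings (Fin n) d m, selectionMeasure n p {ω | ∀ s ∈ c.2, ω s = true} := by
        rw [hunion]
        exact measure_biUnion_finset_le _ _
    _ = ∑ _c ∈ gluings (Fin n) d m, (∏ i ∈ Icc 1 d, p i ^ d.choose i) ^ m :=
        sum_congr rfl fun c hc => by
          rw [selectionMeasure_forall_mem hp, (mem_gluings.1 hc).prod_card_sub_one]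
    _ = #(gluings (Fin n) d m) * (∏ i ∈ Icc 1 d, p i ^ d.choose i) ^ m := by
        rw [sum_const, nsmul_eq_mul]

lemma mem_gluingEvent_of_faces_subset {d m : ℕ} {ω : Finset (Fin n) → Bool} {Y : SComplex (Fin n)}
    (hY : Y.faces ⊆ (lowerComplex n ω).faces) (hp : IsPure Y d) (hs : StronglyConnected Y d)
    (hm : d + m ≤ #(Y.faces.sup id)) : ω ∈ gluingEvent n d m := by
  obtain ⟨W, A, hWA, hAY, -⟩ := exists_isGluing_subset_faces hp hs hm
  exact ⟨W, A, hWA, fun s hsA =>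
    (mem_filter.1 (hY (hAY hsA))).2 s Subset.rfl (hWA.two_le_card hsA)⟩

end UnionBound

section Asymptotics

open Filter Topology

variable {α : ℕ → ℝ} {n k m : ℕ}

lemma lowerP_le_one (hα : ∀ i, 0 ≤ α i) (n i : ℕ) : lowerP α n i ≤ 1 := by
  refine ENNReal.ofReal_le_one.2 ?_
  rcases n.eq_zero_or_pos with rfl | hn
  · simpa using Real.zero_rpow_le_one (-α i)
  · exact Real.rpow_le_one_of_one_le_of_nonpos (by exact_mod_cast hn) (neg_nonpos.2 (hα i))

lemma S1_one (α : ℕ → ℝ) : S1 α 1 = 2 * α 1 + α 2 := by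
  simp [S1, sum_Icc_succ_top]

lemma prod_lowerP_pow_choose (hn : 0 < n) (α : ℕ → ℝ) (k : ℕ) :
    ∏ i ∈ Icc 1 (k + 1), lowerP α n i ^ (k + 1).choose i =
      ENNReal.ofReal ((n : ℝ) ^ (-S1 α k)) := by
  have hn' : (0 : ℝ) < n := by exact_mod_cast hn
  rw [S1, ← sum_neg_distrib, Real.rpow_sum_of_pos hn',
    ENNReal.ofReal_prod_of_nonneg fun i _ => by positivity]
  refine prod_congr rfl fun i _ => ?_
  rw [lowerP, ← ENNReal.ofReal_pow (by positivity), ← Real.rpow_mul_natCast hn'.le]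
  congr 2
  ring

lemma selectionMeasure_lowerP_gluingEvent_le (hα : ∀ i, 0 ≤ α i) (hn : 0 < n) (k m : ℕ) :
    selectionMeasure n (lowerP α n) (gluingEvent n (k + 1) m) ≤
      ENNReal.ofReal ((∏ j ∈ range m, (k + 1 + j).choose (k + 1) : ℕ) *
        (n : ℝ) ^ (-(m * (S1 α k - 1) - (k + 1)))) := by
  have hn' : (0 : ℝ) < n := by exact_mod_cast hn
  have hcount := card_gluings_le (Fin n) (k + 1) m
  rw [Fintype.card_fin] at hcount
  set C := ∏ j ∈ range m, (k + 1 + j).choose (k + 1)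
  calc selectionMeasure n (lowerP α n) (gluingEvent n (k + 1) m)
    _ ≤ #(gluings (Fin n) (k + 1) m) * ENNReal.ofReal ((n : ℝ) ^ (-S1 α k)) ^ m := by
        rw [← prod_lowerP_pow_choose hn]
        exact selectionMeasure_gluingEvent_le (lowerP_le_one hα n) (k + 1) m
    _ ≤ (C * n ^ (k + 1 + m) : ℕ) * ENNReal.ofReal ((n : ℝ) ^ (-S1 α k)) ^ m := by gcongr
    _ = ENNReal.ofReal (C * ((n : ℝ) ^ (k + 1 + m) * ((n : ℝ) ^ (-S1 α k)) ^ m)) := by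
        rw [← ENNReal.ofReal_natCast, ← ENNReal.ofReal_pow (by positivity),
          ← ENNReal.ofReal_mul (by positivity)]
        push_cast
        rw [mul_assoc]
    _ = ENNReal.ofReal (C * (n : ℝ) ^ (-(m * (S1 α k - 1) - (k + 1)))) := by
        rw [← Real.rpow_natCast, ← Real.rpow_mul_natCast hn'.le, ← Real.rpow_add hn']
        congr 3
        push_cast
        ring

lemma tendsto_selectionMeasure_gluingEvent (hα : ∀ i, 0 ≤ α i) (hm : k + 1 < m * (S1 α k - 1)) :
    Tendsto (fun n => selectionMeasure n (lowerP α n) (gluingEvent n (k + 1) m)) atTop (𝓝 0) := by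
  have hbound := ENNReal.tendsto_ofReal
    (((tendsto_rpow_neg_atTop (sub_pos.2 hm)).comp tendsto_natCast_atTop_atTop).const_mul
      ((∏ j ∈ range m, (k + 1 + j).choose (k + 1) : ℕ) : ℝ))
  rw [mul_zero, ENNReal.ofReal_zero] at hbound
  refine tendsto_of_tendsto_of_tendsto_of_le_of_le' tendsto_const_nhds hbound
    (.of_forall fun _ => zero_le) ?_
  filter_upwards [eventually_gt_atTop 0] with n hn
  exact selectionMeasure_lowerP_gluingEvent_le hα hn k m

lemma tendsto_measure_one_of_compl_subset {ι : Type*} {l : Filter ι} {Ω : ι → Type*}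
    [∀ i, MeasurableSpace (Ω i)] {μ : ∀ i, Measure (Ω i)} [∀ i, IsProbabilityMeasure (μ i)]
    {s t : ∀ i, Set (Ω i)} (hst : ∀ i, (s i)ᶜ ⊆ t i)
    (ht : Tendsto (fun i => μ i (t i)) l (𝓝 0)) : Tendsto (fun i => μ i (s i)) l (𝓝 1) := by
  have hsub : Tendsto (fun i => 1 - μ i (t i)) l (𝓝 1) := by
    simpa using ENNReal.Tendsto.sub tendsto_const_nhds ht (.inl ENNReal.one_ne_top)
  refine tendsto_of_tendsto_of_tendsto_of_le_of_le hsub tendsto_const_nhds (fun i => ?_)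
    fun i => prob_le_one
  rw [tsub_le_iff_right, ← measure_univ (μ := μ i)]
  calc μ i Set.univ
    _ ≤ μ i (s i ∪ t i) := measure_mono fun ω _ => or_iff_not_imp_left.2 fun hω => hst i hω
    _ ≤ μ i (s i) + μ i (t i) := measure_union_le _ _

end Asymptotics

theorem finitely_many_strong_components_dim_two_general {α : ℕ → ℝ} (hα : ∀ i, 0 ≤ α i) {k K : ℕ}
    (hε : 0 < S1 α k - 1) (hK : (k + 1) / (S1 α k - 1) + (k + 1) < (K : ℝ)) :
    Filter.Tendsto
      (fun n => selectionMeasure n (lowerP α n)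
        {ω | ∀ Y : SComplex (Fin n), Y.faces ⊆ (lowerComplex n ω).faces →
          IsPure Y (k + 1) → StronglyConnected Y (k + 1) → #(Y.faces.sup id) < K})
      Filter.atTop (nhds 1) := by
  have hkK : k + 1 ≤ K := by
    have : (k : ℝ) + 1 < K := (le_add_of_nonneg_left (by positivity)).trans_lt hK
    exact_mod_cast this.le
  obtain ⟨m, rfl⟩ := Nat.exists_eq_add_of_le hkK
  have hm : k + 1 < m * (S1 α k - 1) := by
    rw [← div_lt_iff₀ hε]
    push_cast at hK
    linarith
  have (n : ℕ) := isProbabilityMeasure_selectionMeasure (n := n) (lowerP_le_one hα n)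
  refine tendsto_measure_one_of_compl_subset (fun n ω hω => ?_)
    (tendsto_selectionMeasure_gluingEvent hα hm)
  simp only [Set.mem_compl_iff, Set.mem_ofPred_eq, not_forall, not_lt] at hω
  obtain ⟨Y, hY, hp, hs, hcard⟩ := hω
  exact mem_gluingEvent_of_faces_subset hY hp hs hcard

/-- if `ε = 2α₁ + α₂ − 1 > 0` and `K ≥ 2/ε + 4`, then a.a.s. the lower
multiparametric random complex contains no strongly connected pure 2-dimensional subcomplex
with `K` or more vertices. -/
theorem finitely_many_strong_components_dim_two (α : ℕ → ℝ) (hα : ∀ i, 0 ≤ α i)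
    (h1 : 0 < α 1) (h2 : 0 < α 2) (hε : 0 < 2 * α 1 + α 2 - 1)
    (K : ℕ) (hK : 2 / (2 * α 1 + α 2 - 1) + 4 ≤ (K : ℝ)) :
    Filter.Tendsto
      (fun n => selectionMeasure n (lowerP α n)
        {ω | ∀ Y : SComplex (Fin n), Y.faces ⊆ (lowerComplex n ω).faces →
          IsPure Y 2 → StronglyConnected Y 2 → (Y.faces.sup id).card < K})
      Filter.atTop (nhds 1) :=
  finitely_many_strong_components_dim_two_general hα (k := 1) (by rw [S1_one]; linarith)
    (by rw [S1_one]; push_cast; linarith)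
end
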